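/- arXiv:math/0406242 — 3 statements merged into one kernel-verified Lean document; each statement's English description precedes it below -/
import Mathlib

section
/- Let γ : ℝ → ℝ³, γ(t) = (x_t, y_t, z_t), be differentiable at t₀ with derivative (X, Y, Z), where X + Y + Z = 0, the coordinates x_{t₀}, y_{t₀}, z_{t₀} all lie in (0, π), and x_t + y_t + z_t = π for all t. Then the function t ↦ 𝒱(x_t, y_t, z_t) has derivative at t₀ equal to −(X·log(sin x_{t₀}) + Y·log(sin y_{t₀}) + Z·log(sin z_{t₀})); equivalently, exp(−(d/dt)𝒱(x_t,y_t,z_t)|_{t=t₀}) = (sin x_{t₀})^X · (sin y_{t₀})^Y · (sin z_{t₀})^Z, where the exponents are real powers. -/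
/-- The Lobachevsky-type integral `∫₀ˣ log(2 sin u) du`. -/
noncomputable def lob (x : ℝ) : ℝ := ∫ u in (0:ℝ)..x, Real.log (2 * Real.sin u)

/-- The volume `𝒱(x,y,z)` of the ideal hyperbolic tetrahedron with dihedral angles
`x, y, z`. -/
noncomputable def idealVol (p : ℝ × ℝ × ℝ) : ℝ := -lob p.1 - lob p.2.1 - lob p.2.2

theorem intervalIntegrable_log_const_mul_sin (c a b : ℝ) :
    IntervalIntegrable (fun u => Real.log (c * Real.sin u)) MeasureTheory.volume a b := by
  have hanalytic : AnalyticOnNhd ℝ (fun u => c * Real.sin u) (Set.uIcc a b) :=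
    fun u _ => by fun_prop
  exact hanalytic.meromorphicOn.intervalIntegrable_log

/-- Since `Real.log` is `log |·|`, the formula is not confined to `(0, π)`: the integrand only has
logarithmic, hence integrable, singularities at the multiples of `π`. -/
theorem hasDerivAt_lob {a : ℝ} (ha : Real.sin a ≠ 0) :
    HasDerivAt lob (Real.log (2 * Real.sin a)) a := by
  have hmeas : Measurable fun u => Real.log (2 * Real.sin u) := by fun_prop
  have hcont : ContinuousAt (fun u => Real.log (2 * Real.sin u)) a :=
    ContinuousAt.log (by fun_prop) (mul_ne_zero two_ne_zero ha)
  exact intervalIntegral.integral_hasDerivAt_right (intervalIntegrable_log_const_mul_sin 2 0 a)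
    hmeas.stronglyMeasurable.stronglyMeasurableAtFilter hcont

theorem hasDerivAt_idealVol_of_sin_ne_zero {x y z : ℝ → ℝ} {t₀ X Y Z : ℝ}
    (hx : HasDerivAt x X t₀) (hy : HasDerivAt y Y t₀) (hz : HasDerivAt z Z t₀)
    (hsx : Real.sin (x t₀) ≠ 0) (hsy : Real.sin (y t₀) ≠ 0) (hsz : Real.sin (z t₀) ≠ 0) :
    HasDerivAt (fun t => idealVol (x t, y t, z t))
      (-(X * Real.log (2 * Real.sin (x t₀)) + Y * Real.log (2 * Real.sin (y t₀)) +
          Z * Real.log (2 * Real.sin (z t₀)))) t₀ := by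
  have hlobx := (hasDerivAt_lob hsx).comp t₀ hx
  have hloby := (hasDerivAt_lob hsy).comp t₀ hy
  have hlobz := (hasDerivAt_lob hsz).comp t₀ hz
  exact ((hlobx.neg.sub hloby).sub hlobz).congr_deriv (by ring)

theorem mul_log_const_mul_add_add_of_add_eq_zero {X Y Z a b c k : ℝ} (hXYZ : X + Y + Z = 0)
    (hk : k ≠ 0) (ha : a ≠ 0) (hb : b ≠ 0) (hc : c ≠ 0) :
    X * Real.log (k * a) + Y * Real.log (k * b) + Z * Real.log (k * c) =
      X * Real.log a + Y * Real.log b + Z * Real.log c := by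
  rw [Real.log_mul hk ha, Real.log_mul hk hb, Real.log_mul hk hc]
  linear_combination Real.log k * hXYZ

theorem exp_mul_log_add_add {a b c : ℝ} (ha : 0 < a) (hb : 0 < b) (hc : 0 < c) (X Y Z : ℝ) :
    Real.exp (X * Real.log a + Y * Real.log b + Z * Real.log c) = a ^ X * b ^ Y * c ^ Z := by
  rw [Real.exp_add, Real.exp_add, mul_comm X, mul_comm Y, mul_comm Z,
    ← Real.rpow_def_of_pos ha, ← Real.rpow_def_of_pos hb, ← Real.rpow_def_of_pos hc]

theorem hasDerivAt_idealVol_general {x y z : ℝ → ℝ} {t₀ X Y Z : ℝ}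
    (hx : HasDerivAt x X t₀) (hy : HasDerivAt y Y t₀) (hz : HasDerivAt z Z t₀)
    (hXYZ : X + Y + Z = 0)
    (hx0 : x t₀ ∈ Set.Ioo 0 Real.pi) (hy0 : y t₀ ∈ Set.Ioo 0 Real.pi)
    (hz0 : z t₀ ∈ Set.Ioo 0 Real.pi) :
    HasDerivAt (fun t => idealVol (x t, y t, z t))
      (-(X * Real.log (Real.sin (x t₀)) + Y * Real.log (Real.sin (y t₀)) +
          Z * Real.log (Real.sin (z t₀)))) t₀ ∧
    Real.exp (-(-(X * Real.log (Real.sin (x t₀)) + Y * Real.log (Real.sin (y t₀)) +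
          Z * Real.log (Real.sin (z t₀))))) =
      Real.sin (x t₀) ^ X * Real.sin (y t₀) ^ Y * Real.sin (z t₀) ^ Z := by
  have hsx : 0 < Real.sin (x t₀) := Real.sin_pos_of_mem_Ioo hx0
  have hsy : 0 < Real.sin (y t₀) := Real.sin_pos_of_mem_Ioo hy0
  have hsz : 0 < Real.sin (z t₀) := Real.sin_pos_of_mem_Ioo hz0
  constructor
  · rw [← mul_log_const_mul_add_add_of_add_eq_zero hXYZ two_ne_zero hsx.ne' hsy.ne' hsz.ne']
    exact hasDerivAt_idealVol_of_sin_ne_zero hx hy hz hsx.ne' hsy.ne' hsz.ne'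
  · rw [neg_neg, exp_mul_log_add_add hsx hsy hsz]

/-- Along a path of angle triples `(x_t, y_t, z_t)` with `x_t + y_t + z_t = π`,
differentiable at `t₀` with derivative `(X, Y, Z)` (so `X + Y + Z = 0`), and with all
angles at `t₀` in `(0, π)`, the volume `t ↦ 𝒱(x_t,y_t,z_t)` has derivative
`−(X log sin x_{t₀} + Y log sin y_{t₀} + Z log sin z_{t₀})` at `t₀`; equivalently the
exponential of the negative of this derivative is `sin^X x_{t₀} sin^Y y_{t₀} sin^Z z_{t₀}`. -/
theorem hasDerivAt_idealVol (x y z : ℝ → ℝ) (t₀ X Y Z : ℝ)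
    (hx : HasDerivAt x X t₀) (hy : HasDerivAt y Y t₀) (hz : HasDerivAt z Z t₀)
    (hXYZ : X + Y + Z = 0)
    (hx0 : x t₀ ∈ Set.Ioo 0 Real.pi) (hy0 : y t₀ ∈ Set.Ioo 0 Real.pi)
    (hz0 : z t₀ ∈ Set.Ioo 0 Real.pi)
    (hsum : ∀ t, x t + y t + z t = Real.pi) :
    HasDerivAt (fun t => idealVol (x t, y t, z t))
      (-(X * Real.log (Real.sin (x t₀)) + Y * Real.log (Real.sin (y t₀)) +
          Z * Real.log (Real.sin (z t₀)))) t₀ ∧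
    Real.exp (-(-(X * Real.log (Real.sin (x t₀)) + Y * Real.log (Real.sin (y t₀)) +
          Z * Real.log (Real.sin (z t₀))))) =
      Real.sin (x t₀) ^ X * Real.sin (y t₀) ^ Y * Real.sin (z t₀) ^ Z :=
  hasDerivAt_idealVol_general hx hy hz hXYZ hx0 hy0 hz0
end

section
/- The function 𝒱 is concave on the closed simplex S = {(x,y,z) ∈ ℝ³ : x ≥ 0, y ≥ 0, z ≥ 0, x + y + z = π}; that is, for all p, q ∈ S and all t ∈ [0,1], 𝒱(t·p + (1−t)·q) ≥ t·𝒱(p) + (1−t)·𝒱(q). (The volume of an ideal tetrahedron is a concave function of its dihedral angles.) -/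
/-- The closed simplex of nonnegative angle triples summing to `π`. -/
def angleSimplex : Set (ℝ × ℝ × ℝ) :=
  {p | 0 ≤ p.1 ∧ 0 ≤ p.2.1 ∧ 0 ≤ p.2.2 ∧ p.1 + p.2.1 + p.2.2 = Real.pi}

/-!
Along a segment in direction `v`, the second derivative of `𝒱` at `p` is
`-(v₁² cot p₁ + v₂² cot p₂ + v₃² cot p₃)`, because `log (2 sin u)` has derivative `cot u`.
Directions tangent to the simplex satisfy `v₁ + v₂ + v₃ = 0`, and on that plane the quadratic form
has determinant `cot p₁ cot p₂ + cot p₂ cot p₃ + cot p₃ cot p₁ = 1` and positive diagonal entries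
such as `cot p₁ + cot p₂ = sin p₃ / (sin p₁ sin p₂)`, so it is positive definite. Hence `𝒱` is
concave on the open simplex, and concavity passes to the closure by continuity.
-/

open Real Set
open scoped Pointwise

section Concavity

theorem concaveOn_closure_of_continuousOn {E β : Type*} [AddCommGroup E] [Module ℝ E]
    [TopologicalSpace E] [IsTopologicalAddGroup E] [ContinuousConstSMul ℝ E]
    [AddCommMonoid β] [PartialOrder β] [SMul ℝ β] [TopologicalSpace β] [OrderClosedTopology β]
    [ContinuousAdd β] [ContinuousConstSMul ℝ β] {s : Set E} {f : E → β}
    (hf : ConcaveOn ℝ s f) (hfc : ContinuousOn f (closure s)) : ConcaveOn ℝ (closure s) f := by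
  refine ⟨hf.1.closure, fun x hx y hy a b ha hb hab ↦ ?_⟩
  have hclosure : closure (s ×ˢ s) = closure s ×ˢ closure s := closure_prod_eq
  have hxy : (x, y) ∈ closure (s ×ˢ s) := hclosure ▸ ⟨hx, hy⟩
  refine le_on_closure (f := fun z : E × E ↦ a • f z.1 + b • f z.2)
    (g := fun z : E × E ↦ f (a • z.1 + b • z.2))
    (fun z hz ↦ hf.2 hz.1 hz.2 ha hb hab) ?_ ?_ hxy <;> rw [hclosure]
  · exact ((hfc.comp continuousOn_fst fun z hz ↦ hz.1).const_smul a).add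
      ((hfc.comp continuousOn_snd fun z hz ↦ hz.2).const_smul b)
  · exact hfc.comp (by fun_prop) fun z hz ↦ hf.1.closure hz.1 hz.2 ha hb hab

theorem concaveOn_of_forall_concaveOn_lineMap {𝕜 E β : Type*} [Ring 𝕜] [PartialOrder 𝕜]
    [IsOrderedRing 𝕜] [AddCommGroup E] [Module 𝕜 E] [AddCommMonoid β] [PartialOrder β] [SMul 𝕜 β]
    {s : Set E} {f : E → β} (hs : Convex 𝕜 s)
    (h : ∀ x ∈ s, ∀ y ∈ s, ConcaveOn 𝕜 (Icc 0 1) fun t : 𝕜 ↦ f (AffineMap.lineMap x y t)) :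
    ConcaveOn 𝕜 s f := by
  refine ⟨hs, fun x hx y hy a b ha hb hab ↦ ?_⟩
  have hxy := (h x hx y hy).2 (x := 0) (by simp) (y := 1) (by simp) ha hb hab
  obtain rfl : a = 1 - b := eq_sub_of_add_eq hab
  simpa [AffineMap.lineMap_apply_module] using hxy

theorem hasDerivAt_comp_lineMap {𝕜 E F : Type*} [NontriviallyNormedField 𝕜] [AddCommGroup E]
    [Module 𝕜 E] [NormedAddCommGroup F] [NormedSpace 𝕜 F] {f : E → F} {f' : F} {x y : E} {t : 𝕜}
    (h : HasLineDerivAt 𝕜 f f' (AffineMap.lineMap x y t) (y - x)) :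
    HasDerivAt (fun r : 𝕜 ↦ f (AffineMap.lineMap x y r)) f' t := by
  rw [HasLineDerivAt, ← sub_self t] at h
  refine (h.comp_sub_const t t).congr_of_eventuallyEq (.of_forall fun r ↦ congrArg f ?_)
  simp only [AffineMap.lineMap_apply_module']
  module

theorem concaveOn_of_hasLineDerivAt2_nonpos {E : Type*} [AddCommGroup E] [Module ℝ E]
    {s : Set E} {f : E → ℝ} {f' f'' : E → E → ℝ} (hs : Convex ℝ s)
    (hf' : ∀ x ∈ s, ∀ v ∈ s - s, HasLineDerivAt ℝ f (f' x v) x v)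
    (hf'' : ∀ x ∈ s, ∀ v ∈ s - s, HasLineDerivAt ℝ (f' · v) (f'' x v) x v)
    (hf''₀ : ∀ x ∈ s, ∀ v ∈ s - s, f'' x v ≤ 0) : ConcaveOn ℝ s f := by
  refine concaveOn_of_forall_concaveOn_lineMap hs fun x hx y hy ↦ ?_
  have hv : y - x ∈ s - s := sub_mem_sub hy hx
  have hmem : ∀ t ∈ Icc (0 : ℝ) 1, AffineMap.lineMap x y t ∈ s := fun t ↦ hs.lineMap_mem hx hy
  have hderiv : ∀ t ∈ Icc (0 : ℝ) 1, HasDerivAt (fun r ↦ f (AffineMap.lineMap x y r))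
      (f' (AffineMap.lineMap x y t) (y - x)) t :=
    fun t ht ↦ hasDerivAt_comp_lineMap (hf' _ (hmem t ht) _ hv)
  exact concaveOn_of_hasDerivWithinAt2_nonpos (convex_Icc 0 1)
    (fun t ht ↦ (hderiv t ht).continuousAt.continuousWithinAt)
    (fun t ht ↦ (hderiv t (interior_subset ht)).hasDerivWithinAt)
    (fun t ht ↦ (hasDerivAt_comp_lineMap
      (hf'' _ (hmem t (interior_subset ht)) _ hv)).hasDerivWithinAt)
    (fun t ht ↦ hf''₀ _ (hmem t (interior_subset ht)) _ hv)

end Concavity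

section Cotangent

theorem weighted_sum_sq_nonneg_of_sum_eq_zero {R : Type*} [CommRing R] [LinearOrder R]
    [IsStrictOrderedRing R] {α β γ x y z : R} (hαβ : 0 < α + β)
    (hdet : 0 ≤ α * β + β * γ + γ * α) (hsum : x + y + z = 0) :
    0 ≤ α * x ^ 2 + β * y ^ 2 + γ * z ^ 2 := by
  obtain rfl : y = -(x + z) := by linear_combination hsum
  have complete_square : (α + β) * (α * x ^ 2 + β * (-(x + z)) ^ 2 + γ * z ^ 2) =
      ((α + β) * x + β * z) ^ 2 + (α * β + β * γ + γ * α) * z ^ 2 := by ring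
  refine nonneg_of_mul_nonneg_right ?_ hαβ
  rw [complete_square]
  positivity

theorem cot_add_cot {x y : ℝ} (hx : sin x ≠ 0) (hy : sin y ≠ 0) :
    cot x + cot y = sin (x + y) / (sin x * sin y) := by
  rw [cot_eq_cos_div_sin, cot_eq_cos_div_sin, sin_add]
  field_simp
  ring

theorem cot_mul_cot_cyclic_sum_eq_one {x y z : ℝ} (hx : sin x ≠ 0) (hy : sin y ≠ 0)
    (hz : sin z ≠ 0) (hsum : x + y + z = π) :
    cot x * cot y + cot y * cot z + cot z * cot x = 1 := by
  obtain rfl : z = π - (x + y) := by linear_combination hsum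
  rw [sin_pi_sub] at hz
  have hcot : cot (π - (x + y)) = -(cos (x + y) / sin (x + y)) := by
    rw [cot_eq_cos_div_sin, cos_pi_sub, sin_pi_sub, neg_div]
  calc cot x * cot y + cot y * cot (π - (x + y)) + cot (π - (x + y)) * cot x
    _ = cot x * cot y + cot (π - (x + y)) * (cot x + cot y) := by ring
    _ = cot x * cot y - cos (x + y) / (sin x * sin y) := by
      rw [hcot, cot_add_cot hx hy]
      field_simp
      ring
    _ = 1 := by
      rw [cot_eq_cos_div_sin, cot_eq_cos_div_sin, cos_add]
      field_simp
      ring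

theorem cot_weighted_sum_sq_nonneg {x y z a b c : ℝ} (hx : 0 < sin x) (hy : 0 < sin y)
    (hz : 0 < sin z) (hangle : x + y + z = π) (hsum : a + b + c = 0) :
    0 ≤ cot x * a ^ 2 + cot y * b ^ 2 + cot z * c ^ 2 := by
  have hpos : 0 < cot x + cot y := by
    rw [cot_add_cot hx.ne' hy.ne', show x + y = π - z by linarith, sin_pi_sub]
    positivity
  have hdet := cot_mul_cot_cyclic_sum_eq_one hx.ne' hy.ne' hz.ne' hangle
  exact weighted_sum_sq_nonneg_of_sum_eq_zero hpos (hdet ▸ zero_le_one) hsum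

end Cotangent

section Lobachevsky

theorem intervalIntegrable_log_two_mul_sin (a b : ℝ) :
    IntervalIntegrable (fun u ↦ log (2 * sin u)) MeasureTheory.volume a b := by
  have hmero : MeromorphicOn (fun u : ℝ ↦ 2 * sin u) (uIcc a b) :=
    AnalyticOnNhd.meromorphicOn fun x _ ↦ by fun_prop
  simpa only [norm_eq_abs, log_abs] using hmero.intervalIntegrable_log_norm

theorem continuous_lob : Continuous lob :=
  intervalIntegral.continuous_primitive intervalIntegrable_log_two_mul_sin 0

theorem hasDerivAt_lob_s7 {x : ℝ} (hx : sin x ≠ 0) : HasDerivAt lob (log (2 * sin x)) x := by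
  have hmeas : Measurable fun u ↦ log (2 * sin u) := by fun_prop
  have hcont : ContinuousAt (fun u ↦ log (2 * sin u)) x :=
    ContinuousAt.log (by fun_prop) (mul_ne_zero two_ne_zero hx)
  exact intervalIntegral.integral_hasDerivAt_right (intervalIntegrable_log_two_mul_sin 0 x)
    hmeas.stronglyMeasurable.stronglyMeasurableAtFilter hcont

theorem hasDerivAt_log_two_mul_sin {x : ℝ} (hx : sin x ≠ 0) :
    HasDerivAt (fun u ↦ log (2 * sin u)) (cot x) x := by
  convert ((hasDerivAt_sin x).const_mul 2).log (mul_ne_zero two_ne_zero hx) using 1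
  rw [cot_eq_cos_div_sin, mul_div_mul_left _ _ two_ne_zero]

end Lobachevsky

section AngleSimplex

/-- The open simplex of positive angle triples summing to `π`: the dihedral angles of nondegenerate
ideal tetrahedra. It is open only relative to its plane. -/
def openAngleSimplex : Set (ℝ × ℝ × ℝ) :=
  {p | 0 < p.1 ∧ 0 < p.2.1 ∧ 0 < p.2.2 ∧ p.1 + p.2.1 + p.2.2 = π}

theorem combo_mem_openAngleSimplex {p q : ℝ × ℝ × ℝ} (hp : p ∈ openAngleSimplex)
    (hq : q ∈ angleSimplex) {a b : ℝ} (ha : 0 < a) (hb : 0 ≤ b) (hab : a + b = 1) :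
    a • p + b • q ∈ openAngleSimplex := by
  obtain ⟨hp₁, hp₂, hp₃, hp_sum⟩ := hp
  obtain ⟨hq₁, hq₂, hq₃, hq_sum⟩ := hq
  simp only [openAngleSimplex, mem_ofPred_eq, Prod.fst_add, Prod.snd_add, Prod.smul_fst,
    Prod.smul_snd, smul_eq_mul]
  refine ⟨by positivity, by positivity, by positivity, ?_⟩
  linear_combination a * hp_sum + b * hq_sum + π * hab

theorem openAngleSimplex_subset_angleSimplex : openAngleSimplex ⊆ angleSimplex :=
  fun _ ⟨h₁, h₂, h₃, hsum⟩ ↦ ⟨h₁.le, h₂.le, h₃.le, hsum⟩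

theorem convex_openAngleSimplex : Convex ℝ openAngleSimplex :=
  convex_iff_forall_pos.2 fun _ hp _ hq _ _ ha hb hab ↦
    combo_mem_openAngleSimplex hp (openAngleSimplex_subset_angleSimplex hq) ha hb.le hab

theorem angleSimplex_subset_closure_openAngleSimplex :
    angleSimplex ⊆ closure openAngleSimplex := by
  intro q hq
  let barycenter : ℝ × ℝ × ℝ := (π / 3, π / 3, π / 3)
  have hbarycenter : barycenter ∈ openAngleSimplex :=
    ⟨by positivity, by positivity, by positivity, by ring⟩
  have hsegment : openSegment ℝ barycenter q ⊆ openAngleSimplex := by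
    rintro _ ⟨a, b, ha, hb, hab, rfl⟩
    exact combo_mem_openAngleSimplex hbarycenter hq ha hb.le hab
  exact closure_mono hsegment (segment_subset_closure_openSegment (right_mem_segment ℝ _ q))

theorem sin_pos_of_mem_openAngleSimplex {p : ℝ × ℝ × ℝ} (hp : p ∈ openAngleSimplex) :
    0 < sin p.1 ∧ 0 < sin p.2.1 ∧ 0 < sin p.2.2 := by
  obtain ⟨h₁, h₂, h₃, hsum⟩ := hp
  exact ⟨sin_pos_of_pos_of_lt_pi h₁ (by linarith), sin_pos_of_pos_of_lt_pi h₂ (by linarith),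
    sin_pos_of_pos_of_lt_pi h₃ (by linarith)⟩

theorem sum_eq_zero_of_mem_openAngleSimplex_sub {v : ℝ × ℝ × ℝ}
    (hv : v ∈ openAngleSimplex - openAngleSimplex) : v.1 + v.2.1 + v.2.2 = 0 := by
  obtain ⟨p, ⟨-, -, -, hp⟩, q, ⟨-, -, -, hq⟩, rfl⟩ := hv
  simp only [Prod.fst_sub, Prod.snd_sub]
  linear_combination hp - hq

end AngleSimplex

section Volume

theorem continuous_idealVol : Continuous idealVol := by
  have := continuous_lob
  unfold idealVol
  fun_prop

/-- The derivative of `idealVol` at `p` in the direction `v`, meaningful where no coordinate of `p`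
is a multiple of `π`. -/
noncomputable def idealVolLineDeriv (p v : ℝ × ℝ × ℝ) : ℝ :=
  -(log (2 * sin p.1) * v.1) - log (2 * sin p.2.1) * v.2.1 - log (2 * sin p.2.2) * v.2.2

/-- The second derivative of `idealVol` at `p` in the direction `v`, i.e. its Hessian form at `p`,
meaningful where no coordinate of `p` is a multiple of `π`. -/
noncomputable def idealVolLineDeriv2 (p v : ℝ × ℝ × ℝ) : ℝ :=
  -(cot p.1 * v.1 ^ 2 + cot p.2.1 * v.2.1 ^ 2 + cot p.2.2 * v.2.2 ^ 2)

theorem hasLineDerivAt_neg_sub_sub {g₁ g₂ g₃ : ℝ → ℝ} {g₁' g₂' g₃' : ℝ} {p : ℝ × ℝ × ℝ}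
    (h₁ : HasDerivAt g₁ g₁' p.1) (h₂ : HasDerivAt g₂ g₂' p.2.1) (h₃ : HasDerivAt g₃ g₃' p.2.2)
    (v : ℝ × ℝ × ℝ) :
    HasLineDerivAt ℝ (fun q : ℝ × ℝ × ℝ ↦ -g₁ q.1 - g₂ q.2.1 - g₃ q.2.2)
      (-(g₁' * v.1) - g₂' * v.2.1 - g₃' * v.2.2) p v := by
  have hfst := hasFDerivAt_fst (𝕜 := ℝ) (p := p)
  have hsnd := hasFDerivAt_snd (𝕜 := ℝ) (p := p)
  have hfderiv := ((h₁.comp_hasFDerivAt p hfst).neg.sub (h₂.comp_hasFDerivAt p hsnd.fst)).sub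
    (h₃.comp_hasFDerivAt p hsnd.snd)
  exact hfderiv.hasLineDerivAt v

theorem hasLineDerivAt_idealVol {p : ℝ × ℝ × ℝ} (h₁ : sin p.1 ≠ 0) (h₂ : sin p.2.1 ≠ 0)
    (h₃ : sin p.2.2 ≠ 0) (v : ℝ × ℝ × ℝ) :
    HasLineDerivAt ℝ idealVol (idealVolLineDeriv p v) p v :=
  hasLineDerivAt_neg_sub_sub (hasDerivAt_lob_s7 h₁) (hasDerivAt_lob_s7 h₂) (hasDerivAt_lob_s7 h₃) v

theorem hasLineDerivAt_idealVolLineDeriv {p : ℝ × ℝ × ℝ} (h₁ : sin p.1 ≠ 0) (h₂ : sin p.2.1 ≠ 0)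
    (h₃ : sin p.2.2 ≠ 0) (v : ℝ × ℝ × ℝ) :
    HasLineDerivAt ℝ (idealVolLineDeriv · v) (idealVolLineDeriv2 p v) p v := by
  have hderiv := hasLineDerivAt_neg_sub_sub ((hasDerivAt_log_two_mul_sin h₁).mul_const v.1)
    ((hasDerivAt_log_two_mul_sin h₂).mul_const v.2.1)
    ((hasDerivAt_log_two_mul_sin h₃).mul_const v.2.2) v
  have hvalue : idealVolLineDeriv2 p v =
      -(cot p.1 * v.1 * v.1) - cot p.2.1 * v.2.1 * v.2.1 - cot p.2.2 * v.2.2 * v.2.2 := by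
    rw [idealVolLineDeriv2]
    ring
  exact hvalue ▸ hderiv

theorem concaveOn_idealVol_openAngleSimplex : ConcaveOn ℝ openAngleSimplex idealVol := by
  refine concaveOn_of_hasLineDerivAt2_nonpos (f' := idealVolLineDeriv) (f'' := idealVolLineDeriv2)
    convex_openAngleSimplex (fun p hp v _ ↦ ?_) (fun p hp v _ ↦ ?_) (fun p hp v hv ↦ ?_) <;>
    obtain ⟨h₁, h₂, h₃⟩ := sin_pos_of_mem_openAngleSimplex hp
  · exact hasLineDerivAt_idealVol h₁.ne' h₂.ne' h₃.ne' v
  · exact hasLineDerivAt_idealVolLineDeriv h₁.ne' h₂.ne' h₃.ne' v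
  · exact neg_nonpos.2 (cot_weighted_sum_sq_nonneg h₁ h₂ h₃ hp.2.2.2
      (sum_eq_zero_of_mem_openAngleSimplex_sub hv))

end Volume

/-- The volume of an ideal tetrahedron is a concave function of its dihedral angles:
`𝒱` is concave on the closed angle simplex. -/
theorem idealVol_concave :
    ∀ p ∈ angleSimplex, ∀ q ∈ angleSimplex, ∀ t ∈ Set.Icc (0:ℝ) 1,
      t * idealVol p + (1 - t) * idealVol q ≤ idealVol (t • p + (1 - t) • q) := by
  intro p hp q hq t ht
  have hconcave : ConcaveOn ℝ (closure openAngleSimplex) idealVol :=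
    concaveOn_closure_of_continuousOn concaveOn_idealVol_openAngleSimplex
      continuous_idealVol.continuousOn
  exact hconcave.2 (angleSimplex_subset_closure_openAngleSimplex hp)
    (angleSimplex_subset_closure_openAngleSimplex hq) ht.1 (sub_nonneg.2 ht.2)
    (add_sub_cancel t 1)
end

section
/- Let λ ∈ (−1, 1) and let γ : ℝ → ℝ³, γ(t) = (x_t, y_t, z_t), be a path, differentiable at 0, such that x_t + y_t + z_t = π and x_t, y_t, z_t ≥ 0 for all t in some interval [0, δ) with δ > 0, with (x₀, y₀, z₀) = (0, 0, π) and derivative (d/dt)(x_t, y_t, z_t)|_{t=0} = (1+λ, 1−λ, −2). Then the right-hand derivative of t ↦ 𝒱(x_t, y_t, z_t) at 0 exists and equals −log( ((1−λ²)/4) · ((1+λ)/(1−λ))^λ ); that is, 𝒱(x_t,y_t,z_t)/t tends to this value as t → 0⁺, so exp(−(d𝒱/dt)|_{t=0⁺}) = ((1−λ²)/4) · ((1+λ)/(1−λ))^λ. -/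
/-!
Since `lob (π - w) = -lob w`, the volume on the plane `x + y + z = π` equals
`lob (x + y) - lob x - lob y`. The only singularity of `lob` at `0` is `x log x`: the function
`lob x - x log x` is differentiable there, and its contributions at `x + y`, `x` and `y` cancel to
first order. What is left, `(x + y) log (x + y) - x log x - y log y`, is continuous and homogeneous
of degree one, so its derivative along a path leaving the origin is its value at the velocity.
Because `Real.log x = log |x|`, all of this holds for angles of either sign.
-/

open Real Set Filter Topology MeasureTheory

theorem hasDerivWithinAt_comp_of_homogeneous {𝕜 E F : Type*} [NontriviallyNormedField 𝕜]
    [NormedAddCommGroup E] [NormedSpace 𝕜 E] [NormedAddCommGroup F] [NormedSpace 𝕜 F]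
    {H : E → F} {γ : 𝕜 → E} {v : E} {s : Set 𝕜} {t₀ : 𝕜} (hcont : ContinuousAt H v)
    (hhom : ∀ (c : 𝕜) (w : E), H (c • w) = c • H w)
    (hγ : HasDerivWithinAt γ v s t₀) (hγ₀ : γ t₀ = 0) :
    HasDerivWithinAt (fun t => H (γ t)) (H v) s t₀ := by
  have hH₀ : H 0 = 0 := by simpa using hhom 0 0
  rw [hasDerivWithinAt_iff_tendsto_slope] at hγ ⊢
  refine (hcont.tendsto.comp hγ).congr fun t => ?_
  simp only [Function.comp_apply, slope_def_module, hγ₀, hH₀, sub_zero, hhom]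

/-- The entropy `-a log a - b log b + (a + b) log (a + b)` of the pair of weights `p = (a, b)`.
The weights are not normalised, which makes the entropy homogeneous of degree one. -/
noncomputable def pairEntropy (p : ℝ × ℝ) : ℝ :=
  negMulLog p.1 + negMulLog p.2 - negMulLog (p.1 + p.2)

theorem continuous_pairEntropy : Continuous pairEntropy := by
  unfold pairEntropy
  fun_prop

theorem pairEntropy_smul (c : ℝ) (p : ℝ × ℝ) : pairEntropy (c • p) = c • pairEntropy p := by
  simp only [pairEntropy, Prod.smul_fst, Prod.smul_snd, smul_eq_mul, ← mul_add, negMulLog_mul]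
  ring

theorem pairEntropy_one_add_one_sub {l : ℝ} (hl : l ∈ Ioo (-1) 1) :
    pairEntropy (1 + l, 1 - l) = -log ((1 - l ^ 2) / 4 * ((1 + l) / (1 - l)) ^ l) := by
  have hadd : 0 < 1 + l := by linarith [hl.1]
  have hsub : 0 < 1 - l := by linarith [hl.2]
  have hfactor : (1 - l ^ 2) / 4 = (1 + l) * (1 - l) / (2 * 2) := by ring
  have hsum : 1 + l + (1 - l) = 2 := by ring
  rw [hfactor, log_mul (by positivity) (by positivity), log_rpow (by positivity),
    log_div (by positivity) (by positivity), log_div hadd.ne' hsub.ne',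
    log_mul hadd.ne' hsub.ne', log_mul two_ne_zero two_ne_zero]
  simp only [pairEntropy, negMulLog, hsum]
  ring

theorem ae_sin_ne_zero : ∀ᵐ u : ℝ, sin u ≠ 0 := by
  filter_upwards [(countable_range fun n : ℤ => (n : ℝ) * π).ae_notMem volume] with u hu hsin
  exact hu (sin_eq_zero_iff.mp hsin)

theorem log_sin_ae_eq_log_add_log_sinc :
    (fun u => log (sin u)) =ᵐ[volume] fun u => log u + log (sinc u) := by
  filter_upwards [ae_sin_ne_zero] with u hu
  have hu₀ : u ≠ 0 := fun h => hu (by rw [h, sin_zero])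
  rw [sinc_of_ne_zero hu₀, log_div hu hu₀, add_sub_cancel]

theorem intervalIntegrable_log_sinc (a b : ℝ) :
    IntervalIntegrable (fun u => log (sinc u)) volume a b := by
  have hdiff : IntervalIntegrable (fun u => log (sin u) - log u) volume a b :=
    intervalIntegrable_log_sin.sub intervalIntegral.intervalIntegrable_log'
  refine hdiff.congr_ae (ae_restrict_of_ae ?_)
  filter_upwards [log_sin_ae_eq_log_add_log_sinc] with u hu
  rw [hu, add_sub_cancel_left]

theorem integral_log_sin_eq_integral_log_add_integral_log_sinc (a b : ℝ) :
    ∫ u in a..b, log (sin u) = (∫ u in a..b, log u) + ∫ u in a..b, log (sinc u) := by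
  rw [← intervalIntegral.integral_add intervalIntegral.intervalIntegrable_log'
    (intervalIntegrable_log_sinc a b)]
  exact intervalIntegral.integral_congr_ae
    (log_sin_ae_eq_log_add_log_sinc.mono fun u hu _ => hu)

theorem hasDerivAt_integral_log_sinc_zero :
    HasDerivAt (fun x => ∫ u in (0 : ℝ)..x, log (sinc u)) 0 0 := by
  have hmeas : Measurable fun u => log (sinc u) := continuous_sinc.measurable.log
  have hcont : ContinuousAt (fun u => log (sinc u)) 0 :=
    continuous_sinc.continuousAt.log (by simp)
  simpa using intervalIntegral.integral_hasDerivAt_right (intervalIntegrable_log_sinc 0 0)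
    hmeas.stronglyMeasurable.stronglyMeasurableAtFilter hcont

theorem lob_eq_mul_log_two_add_integral_log_sin (x : ℝ) :
    lob x = x * log 2 + ∫ u in (0 : ℝ)..x, log (sin u) := by
  calc lob x = ∫ u in (0 : ℝ)..x, (log 2 + log (sin u)) :=
        intervalIntegral.integral_congr_ae
          (ae_sin_ne_zero.mono fun u hu _ => log_mul two_ne_zero hu)
    _ = (∫ _ in (0 : ℝ)..x, log 2) + ∫ u in (0 : ℝ)..x, log (sin u) :=
        intervalIntegral.integral_add intervalIntegrable_const intervalIntegrable_log_sin
    _ = x * log 2 + ∫ u in (0 : ℝ)..x, log (sin u) := by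
        rw [intervalIntegral.integral_const, sub_zero, smul_eq_mul]

theorem lob_zero : lob 0 = 0 := intervalIntegral.integral_same

theorem lob_pi_sub (x : ℝ) : lob (π - x) = -lob x := by
  have hsplit : (∫ u in (0 : ℝ)..(π - x), log (sin u)) + ∫ u in (π - x)..π, log (sin u) =
      -log 2 * π :=
    (intervalIntegral.integral_add_adjacent_intervals intervalIntegrable_log_sin
      intervalIntegrable_log_sin).trans integral_log_sin_zero_pi
  have hreflect : ∫ u in (π - x)..π, log (sin u) = ∫ u in (0 : ℝ)..x, log (sin u) := by
    simpa using
      (intervalIntegral.integral_comp_sub_left (fun u => log (sin u)) π (a := 0) (b := x)).symm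
  rw [lob_eq_mul_log_two_add_integral_log_sin, lob_eq_mul_log_two_add_integral_log_sin]
  linarith

theorem lob_add_negMulLog (x : ℝ) :
    lob x + negMulLog x = x * (log 2 - 1) + ∫ u in (0 : ℝ)..x, log (sinc u) := by
  rw [lob_eq_mul_log_two_add_integral_log_sin,
    integral_log_sin_eq_integral_log_add_integral_log_sinc, integral_log, negMulLog]
  ring

theorem hasDerivAt_lob_add_negMulLog_zero :
    HasDerivAt (fun x => lob x + negMulLog x) (log 2 - 1) 0 := by
  simpa only [lob_add_negMulLog, add_zero] using
    (hasDerivAt_mul_const (log 2 - 1)).fun_add hasDerivAt_integral_log_sinc_zero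

theorem idealVol_eq_of_add_eq_pi {x y z : ℝ} (h : x + y + z = π) :
    idealVol (x, y, z) = lob (x + y) - lob x - lob y := by
  have hz : z = π - (x + y) := by linarith
  simp only [idealVol, hz, lob_pi_sub]
  ring

theorem idealVol_zero_zero_pi : idealVol (0, 0, π) = 0 := by
  rw [idealVol_eq_of_add_eq_pi (by ring), add_zero, lob_zero, sub_zero, sub_zero]

theorem hasDerivWithinAt_lob_add_sub_lob_sub_lob {x y : ℝ → ℝ} {a b t₀ : ℝ} {s : Set ℝ}
    (hx : HasDerivWithinAt x a s t₀) (hy : HasDerivWithinAt y b s t₀)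
    (hx₀ : x t₀ = 0) (hy₀ : y t₀ = 0) :
    HasDerivWithinAt (fun t => lob (x t + y t) - lob (x t) - lob (y t))
      (pairEntropy (a, b)) s t₀ := by
  have hentropy : HasDerivWithinAt (fun t => pairEntropy (x t, y t)) (pairEntropy (a, b)) s t₀ :=
    hasDerivWithinAt_comp_of_homogeneous continuous_pairEntropy.continuousAt pairEntropy_smul
      (hx.prodMk hy) (by simp [hx₀, hy₀])
  have hregular {w : ℝ → ℝ} {c : ℝ} (hw : HasDerivWithinAt w c s t₀) (hw₀ : w t₀ = 0) :
      HasDerivWithinAt (fun t => lob (w t) + negMulLog (w t)) ((log 2 - 1) * c) s t₀ :=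
    hasDerivAt_lob_add_negMulLog_zero.comp_hasDerivWithinAt_of_eq t₀ hw hw₀.symm
  have hregular_sum := hregular (hx.fun_add hy) (by simp [hx₀, hy₀])
  have hdecomp (u v : ℝ) : lob (u + v) - lob u - lob v = pairEntropy (u, v) +
      (lob (u + v) + negMulLog (u + v) - (lob u + negMulLog u) - (lob v + negMulLog v)) := by
    simp only [pairEntropy]
    ring
  simp only [hdecomp]
  exact (hentropy.fun_add ((hregular_sum.fun_sub (hregular hx hx₀)).fun_sub
    (hregular hy hy₀))).congr_deriv (by ring)

theorem double_degeneracy_general {x y z : ℝ → ℝ} {a b t₀ : ℝ} {s : Set ℝ}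
    (hx : HasDerivWithinAt x a s t₀) (hy : HasDerivWithinAt y b s t₀)
    (hsum : ∀ᶠ t in 𝓝[s] t₀, x t + y t + z t = π)
    (hx₀ : x t₀ = 0) (hy₀ : y t₀ = 0) (hz₀ : z t₀ = π) :
    HasDerivWithinAt (fun t => idealVol (x t, y t, z t)) (pairEntropy (a, b)) s t₀ :=
  (hasDerivWithinAt_lob_add_sub_lob_sub_lob hx hy hx₀ hy₀).congr_of_eventuallyEq
    (hsum.mono fun _ ht => idealVol_eq_of_add_eq_pi ht)
    (idealVol_eq_of_add_eq_pi (by rw [hx₀, hy₀, hz₀]; ring))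

/-- Double degeneracy: along a path of angle triples, differentiable at `0`, with
`(x₀,y₀,z₀) = (0,0,π)` and derivative `(1+λ, 1−λ, −2)` for `λ ∈ (−1,1)`, the right-hand
derivative of the volume at `0` exists and equals
`−log( ((1−λ²)/4) ((1+λ)/(1−λ))^λ )`. -/
theorem double_degeneracy (l : ℝ) (hl : l ∈ Set.Ioo (-1:ℝ) 1)
    (x y z : ℝ → ℝ) (δ : ℝ) (hδ : 0 < δ)
    (hx : HasDerivAt x (1 + l) 0) (hy : HasDerivAt y (1 - l) 0)
    (hz : HasDerivAt z (-2) 0)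
    (hsum : ∀ t ∈ Set.Ico 0 δ, x t + y t + z t = Real.pi)
    (hnonneg : ∀ t ∈ Set.Ico 0 δ, 0 ≤ x t ∧ 0 ≤ y t ∧ 0 ≤ z t)
    (hx0 : x 0 = 0) (hy0 : y 0 = 0) (hz0 : z 0 = Real.pi) :
    Filter.Tendsto (fun t => idealVol (x t, y t, z t) / t)
      (nhdsWithin 0 (Set.Ioi 0))
      (nhds (-Real.log ((1 - l ^ 2) / 4 * ((1 + l) / (1 - l)) ^ l))) := by
  have hderiv := double_degeneracy_general hx.hasDerivWithinAt hy.hasDerivWithinAt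
    (mem_of_superset (Ico_mem_nhdsGT hδ) hsum) hx0 hy0 hz0
  simpa [slope_fun_def_field, hx0, hy0, hz0, idealVol_zero_zero_pi, pairEntropy_one_add_one_sub hl]
    using (hasDerivWithinAt_iff_tendsto_slope' self_notMem_Ioi).mp hderiv
end
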